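/- arXiv:0901.2280 — 2 statements merged into one kernel-verified Lean document; each statement's English description precedes it below -/
import Mathlib

section
/- Let n ≥ 2, r = (1-n)/2, let h be a real harmonic polynomial on ℝⁿ homogeneous of degree l, let d ≥ 0, p = 2(l+d-r), and let g_{p,l} be as above. Then the function f(t,x) = g_{p,l}(t,x) · h(x) · ((1-it)² + ‖x‖²)^{-p/2} is smooth on ℝ^{1+n} and satisfies □f = 0. -/
open Function

noncomputable def pt {n : ℕ} (f : ℝ × (Fin n → ℝ) → ℂ) (p : ℝ × (Fin n → ℝ)) : ℂ :=
  deriv (fun s => f (s, p.2)) p.1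

noncomputable def px {n : ℕ} (i : Fin n) (f : ℝ × (Fin n → ℝ) → ℂ) (p : ℝ × (Fin n → ℝ)) : ℂ :=
  deriv (fun s => f (p.1, Function.update p.2 i s)) (p.2 i)

/-- The wave operator `□ = -∂_t² + Σᵢ ∂_{xᵢ}²`. -/
noncomputable def Box (n : ℕ) (f : ℝ × (Fin n → ℝ) → ℂ) : ℝ × (Fin n → ℝ) → ℂ :=
  fun p => -pt (pt f) p + ∑ i, px i (px i f) p

open Polynomial

noncomputable def gegenbauer (α : ℝ) : ℕ → Polynomial ℝ
  | 0 => 1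
  | 1 => Polynomial.C (2 * α) * Polynomial.X
  | (d + 2) =>
      Polynomial.C ((2 * ((d : ℝ) + 1 + α)) / ((d : ℝ) + 2)) * Polynomial.X
          * gegenbauer α (d + 1)
        - Polynomial.C (((d : ℝ) + 2 * α) / ((d : ℝ) + 2)) * gegenbauer α d

/-- `q(t,x) = -t² + ‖x‖²`. -/
noncomputable def qfun {n : ℕ} (t : ℝ) (x : Fin n → ℝ) : ℝ := -t ^ 2 + ∑ i, (x i) ^ 2

/-- `λ(t,x) = ((1-q)² + 4‖x‖²)^{1/2}`. -/
noncomputable def lamfun {n : ℕ} (t : ℝ) (x : Fin n → ℝ) : ℝ :=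
  Real.sqrt ((1 - qfun t x) ^ 2 + 4 * ∑ i, (x i) ^ 2)

/-- `g_{p,l}(t,x) = λ^d · C_d^{l-r}((1-q)/λ)`. -/
noncomputable def gpl {n : ℕ} (r : ℝ) (l d : ℕ) (t : ℝ) (x : Fin n → ℝ) : ℝ :=
  (lamfun t x) ^ d * (gegenbauer ((l : ℝ) - r) d).eval ((1 - qfun t x) / lamfun t x)


namespace WaveAux

/-- The quadratic power series `a + b X + c X²`. -/
noncomputable def Q (a b c : ℂ) : PowerSeries ℂ :=
  PowerSeries.C a + PowerSeries.C b * PowerSeries.X + PowerSeries.C c * PowerSeries.X ^ 2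

lemma coeff_Q_zero (a b c : ℂ) (F : PowerSeries ℂ) :
    PowerSeries.coeff 0 (Q a b c * F) = a * PowerSeries.coeff 0 F := by
  simp [Q]

lemma coeff_Q_one (a b c : ℂ) (F : PowerSeries ℂ) :
    PowerSeries.coeff 1 (Q a b c * F)
      = a * PowerSeries.coeff 1 F + b * PowerSeries.coeff 0 F := by
  have h1 := PowerSeries.coeff_succ_X_mul 0 F
  have h2 := PowerSeries.coeff_succ_X_mul 0 (PowerSeries.X * F)
  rw [PowerSeries.coeff_zero_X_mul] at h2
  simp only [zero_add] at h1 h2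
  rw [Q, add_mul, add_mul, mul_assoc, mul_assoc, pow_two, mul_assoc, map_add, map_add,
    PowerSeries.coeff_C_mul, PowerSeries.coeff_C_mul, PowerSeries.coeff_C_mul, h1, h2]
  ring

lemma coeff_Q_succ (a b c : ℂ) (F : PowerSeries ℂ) (d : ℕ) :
    PowerSeries.coeff (d + 2) (Q a b c * F)
      = a * PowerSeries.coeff (d + 2) F + b * PowerSeries.coeff (d + 1) F
        + c * PowerSeries.coeff d F := by
  have h1 := PowerSeries.coeff_succ_X_mul (d + 1) F
  have h2 := PowerSeries.coeff_succ_X_mul (d + 1) (PowerSeries.X * F)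
  rw [PowerSeries.coeff_succ_X_mul d F] at h2
  rw [Q, add_mul, add_mul, mul_assoc, mul_assoc, pow_two, mul_assoc, map_add, map_add,
    PowerSeries.coeff_C_mul, PowerSeries.coeff_C_mul, PowerSeries.coeff_C_mul, h1, h2]

lemma derivative_Q (a b c : ℂ) :
    PowerSeries.derivative ℂ (Q a b c) = Q b (2 * c) 0 := by
  ext n
  rw [PowerSeries.coeff_derivative]
  have e := fun (a b c : ℂ) => (mul_one (Q a b c)).symm
  rw [e a b c, e b]
  rcases n with _ | _ | n
  · rw [zero_add, coeff_Q_one, coeff_Q_zero]; simp [PowerSeries.coeff_one]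
  · rw [zero_add, coeff_Q_succ, coeff_Q_one]; simp [PowerSeries.coeff_one]; ring
  · rw [coeff_Q_succ, coeff_Q_succ]; simp [PowerSeries.coeff_one]

/-- Uniqueness for the first order formal ODE. -/
lemma ode_unique (w b c a0 a1 : ℂ) (hw : w ≠ 0) (F : PowerSeries ℂ)
    (hF : Q w b c * PowerSeries.derivative ℂ F = Q a0 a1 0 * F)
    (h0 : PowerSeries.coeff 0 F = 0) : F = 0 := by
  ext n
  rw [map_zero]
  induction n using Nat.strong_induction_on with
  | _ n ih =>
    rcases n with _ | _ | _ | n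
    · exact h0
    · have := congrArg (PowerSeries.coeff 0) hF
      rw [coeff_Q_zero, coeff_Q_zero, PowerSeries.coeff_derivative, h0] at this
      simpa [hw] using this
    · have := congrArg (PowerSeries.coeff 1) hF
      rw [coeff_Q_one, coeff_Q_one, PowerSeries.coeff_derivative, PowerSeries.coeff_derivative,
        zero_add, ih 1 (by omega), h0] at this
      have h2 : ((1 : ℕ) : ℂ) + 1 ≠ 0 := by norm_num
      simpa [hw, h2] using this
    · have := congrArg (PowerSeries.coeff (n + 2)) hF
      rw [coeff_Q_succ, coeff_Q_succ, PowerSeries.coeff_derivative, PowerSeries.coeff_derivative,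
        PowerSeries.coeff_derivative, ih (n + 1 + 1) (by omega), ih (n + 1) (by omega),
        ih n (by omega)] at this
      have h2 : ((n + 2 : ℕ) : ℂ) + 1 ≠ 0 := by exact_mod_cast Nat.succ_ne_zero (n + 2)
      simpa only [zero_mul, mul_zero, add_zero, mul_eq_zero, hw, h2, false_or, or_false] using this

/-- Coefficients of `(w - 2us + vs²)^{-α}`. -/
noncomputable def K (α w u v : ℂ) : ℕ → ℂ
  | 0 => w ^ (-α)
  | 1 => 2 * α * u * w ^ (-α) / w
  | (d + 2) => (2 * ((d : ℂ) + 1 + α) * u * K α w u v (d + 1) - ((d : ℂ) + 2 * α) * v * K α w u v d)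
      / (((d : ℂ) + 2) * w)

noncomputable def S (α w u v : ℂ) : PowerSeries ℂ := PowerSeries.mk (K α w u v)

lemma coeff_S (α w u v : ℂ) (d : ℕ) : PowerSeries.coeff d (S α w u v) = K α w u v d := by
  simp [S]

lemma S_ode (α w u v : ℂ) (hw : w ≠ 0) :
    Q w (-2 * u) v * PowerSeries.derivative ℂ (S α w u v)
      = PowerSeries.C (-α) * (Q (-2 * u) (2 * v) 0 * S α w u v) := by
  ext n
  rw [PowerSeries.coeff_C_mul]
  rcases n with _ | _ | n
  · rw [coeff_Q_zero, coeff_Q_zero, PowerSeries.coeff_derivative, coeff_S, coeff_S, K, K]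
    field_simp
    simp
  · rw [zero_add, coeff_Q_one, coeff_Q_one, PowerSeries.coeff_derivative,
      PowerSeries.coeff_derivative]
    simp only [coeff_S, K]
    field_simp
    push_cast
    ring
  · rw [coeff_Q_succ, coeff_Q_succ, PowerSeries.coeff_derivative,
      PowerSeries.coeff_derivative, PowerSeries.coeff_derivative]
    simp only [coeff_S]
    rw [K.eq_3 α w u v (n + 1)]
    have h2 : (n : ℂ) + 1 + 2 ≠ 0 := by exact_mod_cast Nat.succ_ne_zero (n + 2)
    push_cast
    field_simp
    ring

lemma S_shift (α w u v : ℂ) (hw : w ≠ 0) :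
    S α w u v = Q w (-2 * u) v * S (α + 1) w u v := by
  rw [← sub_eq_zero]
  apply ode_unique w (-2 * u) v (2 * α * u) (-2 * α * v) hw
  · have h1 := S_ode α w u v hw
    have h2 := S_ode (α + 1) w u v hw
    have e : Q (2 * α * u) (-2 * α * v) 0 = PowerSeries.C (-α) * Q (-2 * u) (2 * v) 0 := by
      simp only [Q, map_mul, map_neg, map_zero]; ring
    rw [e, map_sub, Derivation.leibniz, derivative_Q, smul_eq_mul, smul_eq_mul]
    rw [map_neg, map_add, map_one] at h2
    rw [map_neg] at h1 ⊢
    linear_combination h1 - Q w (-2 * u) v * h2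
  · rw [map_sub, coeff_Q_zero, coeff_S, coeff_S, K, K, neg_add, Complex.cpow_add _ _ hw,
      Complex.cpow_neg_one]
    field_simp
    ring

/-- Coefficientwise derivative of a curve of power series. -/
def HasPSD (F : ℝ → PowerSeries ℂ) (F' : PowerSeries ℂ) (τ : ℝ) : Prop :=
  ∀ d, HasDerivAt (fun s => PowerSeries.coeff d (F s)) (PowerSeries.coeff d F') τ

lemma HasPSD.mul {F G : ℝ → PowerSeries ℂ} {F' G' : PowerSeries ℂ} {τ : ℝ}
    (hF : HasPSD F F' τ) (hG : HasPSD G G' τ) :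
    HasPSD (fun s => F s * G s) (F' * G τ + F τ * G') τ := by
  intro d
  simp only [map_add, PowerSeries.coeff_mul, ← Finset.sum_add_distrib]
  exact HasDerivAt.fun_sum fun i _ => (hF i.1).mul (hG i.2)

lemma HasPSD.C {f : ℝ → ℂ} {f' : ℂ} {τ : ℝ} (hf : HasDerivAt f f' τ) :
    HasPSD (fun s => PowerSeries.C (f s)) (PowerSeries.C f') τ := by
  intro d
  simp only [PowerSeries.coeff_C]
  split_ifs
  · exact hf
  · exact hasDerivAt_const _ _

lemma HasPSD.Q {a b c : ℝ → ℂ} {a' b' c' : ℂ} {τ : ℝ} (ha : HasDerivAt a a' τ)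
    (hb : HasDerivAt b b' τ) (hc : HasDerivAt c c' τ) :
    HasPSD (fun s => Q (a s) (b s) (c s)) (Q a' b' c') τ := by
  suffices h : HasPSD (fun s => WaveAux.Q (a s) (b s) (c s) * 1) (WaveAux.Q a' b' c' * 1) τ by
    simpa only [mul_one] using h
  intro d
  rcases d with _ | _ | d
  · simp only [coeff_Q_zero]
    exact ha.mul_const _
  · simp only [zero_add, coeff_Q_one]
    exact (ha.mul_const _).add (hb.mul_const _)
  · simp only [coeff_Q_succ]
    exact ((ha.mul_const _).add (hb.mul_const _)).add (hc.mul_const _)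

lemma S_hasPSD (α : ℂ) {w u v : ℝ → ℂ} {w' u' v' : ℂ} {τ : ℝ} (hw : HasDerivAt w w' τ)
    (hu : HasDerivAt u u' τ) (hv : HasDerivAt v v' τ) (hs : w τ ∈ Complex.slitPlane) :
    HasPSD (fun s => S α (w s) (u s) (v s))
      (PowerSeries.C (-α) * (Q w' (-2 * u') v' * S (α + 1) (w τ) (u τ) (v τ))) τ := by
  have hw0 : w τ ≠ 0 := Complex.slitPlane_ne_zero hs
  set D := PowerSeries.C (-α) * (Q w' (-2 * u') v' * S (α + 1) (w τ) (u τ) (v τ)) with hD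
  have E : Q (w τ) (-2 * u τ) (v τ) * PowerSeries.derivative ℂ D
      + Q w' (-2 * u') v' * PowerSeries.derivative ℂ (S α (w τ) (u τ) (v τ))
      = PowerSeries.C (-α) * (Q (-2 * u') (2 * v') 0 * S α (w τ) (u τ) (v τ)
        + Q (-2 * u τ) (2 * v τ) 0 * D) := by
    have h2 := S_ode (α + 1) _ (u τ) (v τ) hw0
    rw [S_shift α _ _ _ hw0, hD]
    simp only [Derivation.leibniz, derivative_Q, smul_eq_mul, PowerSeries.derivative_C]
    rw [map_neg, map_add, map_one] at h2
    rw [map_neg]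
    linear_combination (Q w' (-2 * u') v' * (1 - PowerSeries.C α)) * h2
  have h0 : HasDerivAt (fun s => w s ^ (-α)) (PowerSeries.coeff 0 D) τ := by
    have h := ((hasDerivAt_id (w τ)).cpow_const (c := -α) hs).comp τ hw
    convert! h using 1
    rw [hD, PowerSeries.coeff_C_mul, coeff_Q_zero, coeff_S, K]
    simp only [id]
    rw [show -α - 1 = -(α + 1) by ring]
    ring
  intro d
  simp only [coeff_S]
  induction d using Nat.strong_induction_on with
  | _ d ih =>
    rcases d with _ | _ | d
    · simpa only [K] using h0
    · simp only [K]
      have h := (((hu.const_mul (2 * α)).mul h0).div hw hw0)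
      convert! h using 1
      have E0 := congrArg (PowerSeries.coeff 0) E
      simp only [map_add, PowerSeries.coeff_C_mul, coeff_Q_zero,
        PowerSeries.coeff_derivative, coeff_S, K] at E0
      simp only [zero_add, Nat.cast_zero] at E0 ⊢
      simp only [Pi.mul_apply]
      field_simp
      field_simp at E0
      linear_combination E0
    · simp only [K]
      have ha := ih (d + 1) (by omega)
      have hb := ih d (by omega)
      have hd2 : (d : ℂ) + 2 ≠ 0 := by exact_mod_cast Nat.succ_ne_zero (d + 1)
      have h := ((((hu.const_mul (2 * ((d : ℂ) + 1 + α))).mul ha).sub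
        ((hv.const_mul ((d : ℂ) + 2 * α)).mul hb)).div (hw.const_mul ((d : ℂ) + 2))
        (mul_ne_zero hd2 hw0))
      convert! h using 1
      have hK : K α (w τ) (u τ) (v τ) (d + 2) * (((d : ℂ) + 2) * w τ) = 
          (2 * ((d : ℂ) + 1 + α) * u τ * K α (w τ) (u τ) (v τ) (d + 1)
          - ((d : ℂ) + 2 * α) * v τ * K α (w τ) (u τ) (v τ) d) := by
        rw [K]; field_simp
      have E0 : w τ * PowerSeries.coeff (d + 2) D * ((d : ℂ) + 2)
          + w' * K α (w τ) (u τ) (v τ) (d + 2) * ((d : ℂ) + 2)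
          = 2 * ((d : ℂ) + 1 + α) * (u' * K α (w τ) (u τ) (v τ) (d + 1)
              + u τ * PowerSeries.coeff (d + 1) D)
            - ((d : ℂ) + 2 * α) * (v' * K α (w τ) (u τ) (v τ) d
              + v τ * PowerSeries.coeff d D) := by
        rcases d with _ | d
        · have E0 := congrArg (PowerSeries.coeff 1) E
          simp only [map_add, PowerSeries.coeff_C_mul, coeff_Q_one,
            PowerSeries.coeff_derivative, coeff_S] at E0
          simp only [zero_add, Nat.cast_zero, Nat.cast_one] at E0 ⊢
          linear_combination E0
        · have E0 := congrArg (PowerSeries.coeff (d + 2)) E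
          simp only [map_add, PowerSeries.coeff_C_mul, coeff_Q_succ,
            PowerSeries.coeff_derivative, coeff_S] at E0
          push_cast at E0 ⊢
          linear_combination E0
      rw [eq_div_iff (pow_ne_zero _ (mul_ne_zero hd2 hw0))]
      simp only [Pi.mul_apply, Pi.sub_apply]
      rw [← hK]
      linear_combination (((d : ℂ) + 2) * w τ) * E0


lemma K_contDiff {E : Type*} [NormedAddCommGroup E] [NormedSpace ℝ E] (α : ℂ) {w u v : E → ℂ}
    (hw : ContDiff ℝ (⊤ : ℕ∞) w) (hu : ContDiff ℝ (⊤ : ℕ∞) u) (hv : ContDiff ℝ (⊤ : ℕ∞) v)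
    (hs : ∀ z, w z ∈ Complex.slitPlane) (d : ℕ) :
    ContDiff ℝ (⊤ : ℕ∞) (fun z => K α (w z) (u z) (v z) d) := by
  have hw0 : ∀ z, w z ≠ 0 := fun z => Complex.slitPlane_ne_zero (hs z)
  have h0 : ContDiff ℝ (⊤ : ℕ∞) (fun z => w z ^ (-α)) := by
    simp only [Complex.cpow_def_of_ne_zero (hw0 _)]
    have hl : ContDiff ℝ (⊤ : ℕ∞) (fun z => Complex.log (w z)) := by
      rw [contDiff_iff_contDiffAt]
      intro z
      exact ContDiffAt.comp z ((Complex.contDiffAt_log (hs z)).restrict_scalars ℝ) hw.contDiffAt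
    exact (hl.mul contDiff_const).cexp
  induction d using Nat.strong_induction_on with
  | _ d ih =>
    rcases d with _ | _ | d
    · simpa only [K] using h0
    · simp only [K, div_eq_mul_inv]
      exact ((contDiff_const.mul hu).mul h0).mul (hw.inv hw0)
    · have hd2 : (d : ℂ) + 2 ≠ 0 := by exact_mod_cast Nat.succ_ne_zero (d + 1)
      simp only [K, div_eq_mul_inv]
      exact (((contDiff_const.mul hu).mul (ih _ (by omega))).sub
        ((contDiff_const.mul hv).mul (ih _ (by omega)))).mul
        ((contDiff_const.mul hw).inv fun z => mul_ne_zero hd2 (hw0 z))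

lemma gegen_K (a lam uu : ℝ) (hl : lam ≠ 0) (w v : ℂ) (hw : w ≠ 0)
    (hwv : w * v = (lam : ℂ) ^ 2) (d : ℕ) :
    ((lam ^ d * (gegenbauer a d).eval (uu / lam) : ℝ) : ℂ) * w ^ (-((a : ℂ) + d))
      = K a w uu v d := by
  have hlc : (lam : ℂ) ≠ 0 := by exact_mod_cast hl
  induction d using Nat.strong_induction_on with
  | _ d ih =>
    rcases d with _ | _ | d
    · simp [K, gegenbauer]
    · simp only [K, gegenbauer]
      have : w ^ (-((a : ℂ) + (0 + 1 : ℕ))) = w ^ (-(a : ℂ)) / w := by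
        rw [show -((a : ℂ) + (0 + 1 : ℕ)) = -(a : ℂ) - 1 by push_cast; ring,
          Complex.cpow_sub _ _ hw, Complex.cpow_one]
      rw [this]
      simp
      field_simp
    · have hd2 : (d : ℂ) + 2 ≠ 0 := by exact_mod_cast Nat.succ_ne_zero (d + 1)
      have h1 := ih (d + 1) (by omega)
      have h2 := ih d (by omega)
      have e1 : w ^ (-((a : ℂ) + (d + 1 : ℕ))) = w * w ^ (-((a : ℂ) + (d + 1 + 1 : ℕ))) := by
        rw [show -((a : ℂ) + (d + 1 + 1 : ℕ)) = -((a : ℂ) + (d + 1 : ℕ)) - 1 by push_cast; ring,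
          Complex.cpow_sub _ _ hw, Complex.cpow_one]
        field_simp
      have e2 : w ^ (-((a : ℂ) + d)) = w * w ^ (-((a : ℂ) + (d + 1 : ℕ))) := by
        rw [show -((a : ℂ) + (d + 1 : ℕ)) = -((a : ℂ) + d) - 1 by push_cast; ring,
          Complex.cpow_sub _ _ hw, Complex.cpow_one]
        field_simp
      rw [K, ← h1, ← h2, e2, e1, gegenbauer]
      generalize w ^ (-((a : ℂ) + (d + 1 + 1 : ℕ))) = P
      simp only [Polynomial.eval_sub, Polynomial.eval_mul, Polynomial.eval_C, Polynomial.eval_X]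
      generalize Polynomial.eval (uu / lam) (gegenbauer a (d + 1)) = G1
      generalize Polynomial.eval (uu / lam) (gegenbauer a d) = G0
      push_cast
      rw [eq_div_iff (mul_ne_zero hd2 hw)]
      field_simp
      simp only [pow_succ]
      linear_combination ((d + 2 * (a : ℂ)) * (lam : ℂ) ^ d * lam * P * G0) * hwv

lemma hasDerivAt_eval {n : ℕ} (h : MvPolynomial (Fin n) ℝ) (x : Fin n → ℝ) (i : Fin n) :
    HasDerivAt (fun s => MvPolynomial.eval (Function.update x i s) h)
      (MvPolynomial.eval x (MvPolynomial.pderiv i h)) (x i) := by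
  induction h using MvPolynomial.induction_on with
  | C a => simpa using hasDerivAt_const (x i) a
  | add p q hp hq =>
    simp only [map_add]
    exact hp.add hq
  | mul_X p j hp =>
    have hj : HasDerivAt (fun s => Function.update x i s j)
        (MvPolynomial.eval x (MvPolynomial.pderiv i (MvPolynomial.X j))) (x i) := by
      rw [MvPolynomial.pderiv_X]
      by_cases hij : j = i
      · subst hij
        simp only [Function.update_self, Pi.single_eq_same, map_one]
        exact hasDerivAt_id (x j)
      · simpa [hij, Pi.single_apply, Ne.symm hij] using hasDerivAt_const (x i) (x j)
    have := hp.mul hj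
    convert! this using 1
    · ext s; simp
    · simp [Derivation.leibniz]; ring

lemma eval_contDiff {n : ℕ} (h : MvPolynomial (Fin n) ℝ) :
    ContDiff ℝ (⊤ : ℕ∞) (fun x : Fin n → ℝ => MvPolynomial.eval x h) := by
  induction h using MvPolynomial.induction_on with
  | C a => simpa using contDiff_const
  | add p q hp hq => simpa using hp.add hq
  | mul_X p j hp => simpa using hp.mul (contDiff_apply ℝ ℝ j)


section

variable {n : ℕ}

/-- `w = (1 - it)² + ‖x‖²`. -/
noncomputable def wf (z : ℝ × (Fin n → ℝ)) : ℂ :=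
  (1 - Complex.I * z.1) ^ 2 + ((∑ i, (z.2 i) ^ 2 : ℝ) : ℂ)

noncomputable def vf (z : ℝ × (Fin n → ℝ)) : ℂ :=
  (1 + Complex.I * z.1) ^ 2 + ((∑ i, (z.2 i) ^ 2 : ℝ) : ℂ)

noncomputable def uf (z : ℝ × (Fin n → ℝ)) : ℂ := ((1 - qfun z.1 z.2 : ℝ) : ℂ)

lemma uf_eq (z : ℝ × (Fin n → ℝ)) :
    uf z = 1 + (z.1 : ℂ) ^ 2 - ((∑ i, (z.2 i) ^ 2 : ℝ) : ℂ) := by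
  unfold uf qfun
  push_cast
  ring

lemma wf_slit (z : ℝ × (Fin n → ℝ)) : wf z ∈ Complex.slitPlane := by
  rw [Complex.mem_slitPlane_iff]
  have hρ : 0 ≤ ∑ i, (z.2 i) ^ 2 := Finset.sum_nonneg fun i _ => sq_nonneg _
  unfold wf
  by_cases ht : z.1 = 0
  · left
    rw [ht, Complex.ofReal_zero, mul_zero, sub_zero, one_pow, Complex.add_re, Complex.one_re,
      Complex.ofReal_re]
    linarith
  · right
    rw [Complex.add_im, Complex.ofReal_im]
    simp [pow_two, ht]

noncomputable def Sf (α : ℂ) (z : ℝ × (Fin n → ℝ)) : PowerSeries ℂ := S α (wf z) (uf z) (vf z)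

noncomputable def Wt (z : ℝ × (Fin n → ℝ)) : PowerSeries ℂ :=
  Q (-2 * Complex.I * (1 - Complex.I * z.1)) (-2 * (2 * z.1)) (2 * Complex.I * (1 + Complex.I * z.1))

noncomputable def Wx (i : Fin n) (z : ℝ × (Fin n → ℝ)) : PowerSeries ℂ :=
  Q (2 * z.2 i) (-2 * (-2 * z.2 i)) (2 * z.2 i)

lemma Sf_t (α : ℂ) (t : ℝ) (x : Fin n → ℝ) :
    HasPSD (fun s => Sf α (s, x)) (PowerSeries.C (-α) * (Wt (t, x) * Sf (α + 1) (t, x))) t := by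
  have hid : HasDerivAt (fun s : ℝ => (s : ℂ)) 1 t := Complex.ofRealCLM.hasDerivAt
  have hI := hid.const_mul Complex.I
  unfold Sf Wt
  refine S_hasPSD α (w := fun s => wf (s, x)) (u := fun s => uf (s, x)) (v := fun s => vf (s, x))
    ?_ ?_ ?_ (wf_slit (t, x))
  · have := ((hI.const_sub 1).pow 2).add_const (((∑ i, (x i) ^ 2 : ℝ) : ℂ))
    convert! this using 1
    push_cast
    ring
  · simp only [uf_eq]
    have := ((hid.pow 2).const_add 1).sub_const (((∑ i, (x i) ^ 2 : ℝ) : ℂ))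
    convert! this using 1
    push_cast
    ring
  · have := ((hI.const_add 1).pow 2).add_const (((∑ i, (x i) ^ 2 : ℝ) : ℂ))
    convert! this using 1
    push_cast
    ring

lemma hasDerivAt_normsq (x : Fin n → ℝ) (i : Fin n) :
    HasDerivAt (fun s => ((∑ j, (Function.update x i s j) ^ 2 : ℝ) : ℂ)) (2 * x i) (x i) := by
  have h := hasDerivAt_eval (∑ j, (MvPolynomial.X j) ^ 2 : MvPolynomial (Fin n) ℝ) x i
  have e : MvPolynomial.eval x (MvPolynomial.pderiv i
      (∑ j, (MvPolynomial.X j) ^ 2 : MvPolynomial (Fin n) ℝ)) = 2 * x i := by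
    simp [Derivation.leibniz_pow, MvPolynomial.pderiv_X, Pi.single_apply, apply_ite]
  rw [e] at h
  simp only [map_sum, map_pow, MvPolynomial.eval_X] at h
  convert! h.ofReal_comp using 1
  push_cast
  ring

lemma Sf_x (α : ℂ) (t : ℝ) (x : Fin n → ℝ) (i : Fin n) :
    HasPSD (fun s => Sf α (t, Function.update x i s))
      (PowerSeries.C (-α) * (Wx i (t, x) * Sf (α + 1) (t, x))) (x i) := by
  have hr := hasDerivAt_normsq x i
  have hup : Function.update x i (x i) = x := Function.update_eq_self i x
  have key := S_hasPSD α (w := fun s => wf (t, Function.update x i s))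
    (u := fun s => uf (t, Function.update x i s)) (v := fun s => vf (t, Function.update x i s))
    (w' := 2 * x i) (u' := -2 * x i) (v' := 2 * x i) (τ := x i) ?_ ?_ ?_ (wf_slit _)
  · simp only [hup] at key
    exact key
  · exact hr.const_add ((1 - Complex.I * t) ^ 2)
  · simp only [uf_eq]
    convert! hr.const_sub (1 + (t : ℂ) ^ 2) using 1
    ring
  · exact hr.const_add ((1 + Complex.I * t) ^ 2)

lemma Wt_t (t : ℝ) (x : Fin n → ℝ) :
    HasPSD (fun s => Wt (s, x)) (Q (-2) (-4) (-2)) t := by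
  have hid : HasDerivAt (fun s : ℝ => (s : ℂ)) 1 t := Complex.ofRealCLM.hasDerivAt
  have hI := hid.const_mul Complex.I
  unfold Wt
  refine HasPSD.Q ?_ ?_ ?_
  · convert! (hI.const_sub 1).const_mul (-2 * Complex.I) using 1
    linear_combination (-2) * Complex.I_sq
  · convert! (hid.const_mul 2).const_mul (-2) using 1
    ring
  · convert! (hI.const_add 1).const_mul (2 * Complex.I) using 1
    linear_combination (-2) * Complex.I_sq

lemma Wx_x (t : ℝ) (x : Fin n → ℝ) (i : Fin n) :
    HasPSD (fun s => Wx i (t, Function.update x i s)) (Q 2 4 2) (x i) := by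
  have hid : HasDerivAt (fun s : ℝ => (s : ℂ)) 1 (x i) := Complex.ofRealCLM.hasDerivAt
  unfold Wx
  simp only [Function.update_self]
  refine HasPSD.Q ?_ ?_ ?_
  · simpa using hid.const_mul 2
  · convert! (hid.const_mul (-2)).const_mul (-2) using 1
    ring
  · simpa using hid.const_mul 2

lemma HasPSD.const_mul {F : ℝ → PowerSeries ℂ} {F' : PowerSeries ℂ} {τ : ℝ}
    (hF : HasPSD F F' τ) (c : ℂ) :
    HasPSD (fun s => PowerSeries.C c * F s) (PowerSeries.C c * F') τ := by
  have := (HasPSD.C (hasDerivAt_const τ c)).mul hF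
  simpa using this

lemma HasPSD.add {F G : ℝ → PowerSeries ℂ} {F' G' : PowerSeries ℂ} {τ : ℝ}
    (hF : HasPSD F F' τ) (hG : HasPSD G G' τ) :
    HasPSD (fun s => F s + G s) (F' + G') τ := by
  intro d
  simp only [map_add]
  exact (hF d).add (hG d)

/-- Complexified value of a real polynomial, as a constant power series. -/
noncomputable def Hf (h : MvPolynomial (Fin n) ℝ) (z : ℝ × (Fin n → ℝ)) : PowerSeries ℂ :=
  PowerSeries.C ((MvPolynomial.eval z.2 h : ℝ) : ℂ)

lemma Hf_x (h : MvPolynomial (Fin n) ℝ) (t : ℝ) (x : Fin n → ℝ) (i : Fin n) :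
    HasPSD (fun s => Hf h (t, Function.update x i s)) (Hf (MvPolynomial.pderiv i h) (t, x))
      (x i) :=
  HasPSD.C (hasDerivAt_eval h x i).ofReal_comp

lemma pt_first (α : ℂ) (h : MvPolynomial (Fin n) ℝ) (d : ℕ) :
    pt (fun z => PowerSeries.coeff d (Hf h z * Sf α z)) = fun z => PowerSeries.coeff d
      (Hf h z * (PowerSeries.C (-α) * (Wt z * Sf (α + 1) z))) := by
  funext ⟨t, x⟩
  have := (Sf_t α t x).const_mul ((MvPolynomial.eval x h : ℝ) : ℂ)
  exact (this d).deriv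

lemma pt_second (α : ℂ) (h : MvPolynomial (Fin n) ℝ) (d : ℕ) (z : ℝ × (Fin n → ℝ)) :
    pt (pt (fun z => PowerSeries.coeff d (Hf h z * Sf α z))) z = PowerSeries.coeff d
      (Hf h z * (PowerSeries.C (-α) * (Q (-2) (-4) (-2) * Sf (α + 1) z
        + Wt z * (PowerSeries.C (-(α + 1)) * (Wt z * Sf (α + 1 + 1) z))))) := by
  rw [pt_first]
  obtain ⟨t, x⟩ := z
  have := (((Wt_t t x).mul (Sf_t (α + 1) t x)).const_mul (-α)).const_mul
    ((MvPolynomial.eval x h : ℝ) : ℂ)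
  exact (this d).deriv

lemma px_first (α : ℂ) (h : MvPolynomial (Fin n) ℝ) (d : ℕ) (i : Fin n) :
    px i (fun z => PowerSeries.coeff d (Hf h z * Sf α z)) = fun z => PowerSeries.coeff d
      (Hf (MvPolynomial.pderiv i h) z * Sf α z
        + Hf h z * (PowerSeries.C (-α) * (Wx i z * Sf (α + 1) z))) := by
  funext ⟨t, x⟩
  have := ((Hf_x h t x i).mul (Sf_x α t x i) d).deriv
  simp only [Function.update_eq_self] at this
  exact this

lemma px_second (α : ℂ) (h : MvPolynomial (Fin n) ℝ) (d : ℕ) (i : Fin n)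
    (z : ℝ × (Fin n → ℝ)) :
    px i (px i (fun z => PowerSeries.coeff d (Hf h z * Sf α z))) z = PowerSeries.coeff d
      ((Hf (MvPolynomial.pderiv i (MvPolynomial.pderiv i h)) z * Sf α z
        + Hf (MvPolynomial.pderiv i h) z * (PowerSeries.C (-α) * (Wx i z * Sf (α + 1) z)))
        + (Hf (MvPolynomial.pderiv i h) z * (PowerSeries.C (-α) * (Wx i z * Sf (α + 1) z))
        + Hf h z * (PowerSeries.C (-α) * (Q 2 4 2 * Sf (α + 1) z
        + Wx i z * (PowerSeries.C (-(α + 1)) * (Wx i z * Sf (α + 1 + 1) z)))))) := by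
  rw [px_first]
  obtain ⟨t, x⟩ := z
  have := (((Hf_x (MvPolynomial.pderiv i h) t x i).mul (Sf_x α t x i)).add
    ((Hf_x h t x i).mul (((Wx_x t x i).mul (Sf_x (α + 1) t x i)).const_mul (-α))) d).deriv
  simp only [Function.update_eq_self] at this
  exact this

lemma box_zero (l d : ℕ) (α : ℂ) (hα : α = l + ((n : ℂ) - 1) / 2)
    (h : MvPolynomial (Fin n) ℝ) (hhom : h.IsHomogeneous l)
    (hharm : ∑ i : Fin n, MvPolynomial.pderiv i (MvPolynomial.pderiv i h) = 0)
    (z : ℝ × (Fin n → ℝ)) :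
    Box n (fun z => PowerSeries.coeff d (Hf h z * Sf α z)) z = 0 := by
  unfold Box
  rw [pt_second]
  simp only [px_second]
  rw [← map_sum, ← map_neg, ← map_add]
  convert map_zero (PowerSeries.coeff (R := ℂ) d)
  have hH : ∑ i, Hf (MvPolynomial.pderiv i (MvPolynomial.pderiv i h)) z = 0 := by
    unfold Hf
    rw [← map_sum, ← Complex.ofReal_sum, ← map_sum, hharm]
    simp
  have hE : ∑ i, PowerSeries.C (z.2 i : ℂ) * Hf (MvPolynomial.pderiv i h) z
      = PowerSeries.C (l : ℂ) * Hf h z := by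
    have e := congrArg (MvPolynomial.eval z.2) hhom.sum_X_mul_pderiv
    simp only [map_sum, map_mul, MvPolynomial.eval_X, nsmul_eq_mul, map_natCast] at e
    unfold Hf
    simp only [← map_mul, ← map_sum]
    congr 1
    exact_mod_cast e
  set one : PowerSeries ℂ := Q 1 2 1 with hone
  have hWx : ∀ i, Wx i z = 2 * PowerSeries.C (z.2 i : ℂ) * one := by
    intro i
    simp only [Wx, hone, Q, map_mul, map_neg, map_one, map_ofNat]
    ring
  have q1 : Q (-2) (-4) (-2) = -2 * one := by
    simp only [hone, Q, map_neg, map_one, map_ofNat]; ring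
  have q2 : Q 2 4 2 = 2 * one := by
    simp only [hone, Q, map_one, map_ofNat]; ring
  set ρ := PowerSeries.C (((∑ i, (z.2 i) ^ 2 : ℝ) : ℂ)) with hρ
  have hρ' : ∑ i, PowerSeries.C (z.2 i : ℂ) * PowerSeries.C (z.2 i : ℂ) = ρ := by
    simp only [hρ, ← map_mul, ← map_sum]
    congr 1
    push_cast
    exact Finset.sum_congr rfl fun i _ => (pow_two _).symm
  have hshift : Sf (α + 1) z = Q (wf z) (-2 * uf z) (vf z) * Sf (α + 1 + 1) z :=
    S_shift _ _ _ _ (Complex.slitPlane_ne_zero (wf_slit z))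
  have hI : PowerSeries.C Complex.I * PowerSeries.C Complex.I = -1 := by
    rw [← map_mul, Complex.I_mul_I]; simp
  have hnorm : -(Wt z * Wt z) + 4 * ρ * (one * one)
      = 4 * one * Q (wf z) (-2 * uf z) (vf z) := by
    rw [uf_eq]
    simp only [Wt, wf, vf, hone, Q, map_mul, map_neg, map_one, map_ofNat, map_add, map_sub,
      map_pow]
    rw [← hρ]
    generalize PowerSeries.C (z.1 : ℂ) = T
    generalize PowerSeries.C Complex.I = J at hI
    generalize (PowerSeries.X : PowerSeries ℂ) = X
    linear_combination (-(4 * ((1 + X) * ((1 - J * T) - (1 + J * T) * X)) ^ 2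
      + 16 * J * ((1 + X) * ((1 - J * T) - (1 + J * T) * X)) * T * X
      + 16 * T ^ 2 * X ^ 2 * (J * J + 1) - 8 * (1 + X) ^ 2 * X * T ^ 2)) * hI
  have hαC : 2 * PowerSeries.C α = 2 * PowerSeries.C (l : ℂ) + PowerSeries.C (n : ℂ) - 1 := by
    rw [hα]
    have : (2 : PowerSeries ℂ) = PowerSeries.C 2 := (map_ofNat PowerSeries.C 2).symm
    rw [this, ← map_one (PowerSeries.C (R := ℂ)), ← map_mul, ← map_mul, ← map_add, ← map_sub]
    congr 1
    ring
  simp only [hWx, q1, q2, map_neg, map_add, map_one]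
  generalize Sf (α + 1 + 1) z = U at *
  generalize Sf (α + 1) z = T at *
  generalize Sf α z = S0 at *
  generalize Hf h z = H at *
  generalize PowerSeries.C α = a at *
  have e : ∀ i, (Hf (MvPolynomial.pderiv i (MvPolynomial.pderiv i h)) z * S0
        + Hf (MvPolynomial.pderiv i h) z * (-a * (2 * PowerSeries.C (z.2 i : ℂ) * one * T)))
        + (Hf (MvPolynomial.pderiv i h) z * (-a * (2 * PowerSeries.C (z.2 i : ℂ) * one * T))
        + H * (-a * (2 * one * T + 2 * PowerSeries.C (z.2 i : ℂ) * one *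
          (-(a + 1) * (2 * PowerSeries.C (z.2 i : ℂ) * one * U)))))
      = Hf (MvPolynomial.pderiv i (MvPolynomial.pderiv i h)) z * S0
        + (PowerSeries.C (z.2 i : ℂ) * Hf (MvPolynomial.pderiv i h) z) * (-4 * a * one * T)
        + (PowerSeries.C (z.2 i : ℂ) * PowerSeries.C (z.2 i : ℂ)) *
          (4 * a * (a + 1) * one * one * U * H) + -2 * a * one * T * H := by
    intro i; ring
  simp only [e]
  rw [Finset.sum_add_distrib, Finset.sum_add_distrib, Finset.sum_add_distrib, ← Finset.sum_mul,
    ← Finset.sum_mul, ← Finset.sum_mul, hH, hE, hρ', Finset.sum_const, Finset.card_univ,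
    Fintype.card_fin, nsmul_eq_mul]
  rw [map_natCast, map_natCast] at hαC
  rw [map_natCast]
  linear_combination (a * (a + 1) * H * U) * hnorm - 4 * (a * (a + 1) * H * one) * hshift
    + (2 * a * H * one * T) * hαC

end

end WaveAux

open MvPolynomial in
/-- With `r = (1-n)/2`, `h` a real harmonic polynomial on `ℝⁿ` homogeneous of degree `l`,
and `p = 2(l+d-r) = 2l+2d+n-1`, the function
`f(t,x) = g_{p,l}(t,x)·h(x)·((1-it)²+‖x‖²)^{-p/2}` is smooth and solves `□f = 0`. -/
theorem basis_functions_solve_wave_equation (n : ℕ) (hn : 2 ≤ n) (r : ℝ)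
    (hr : r = (1 - (n : ℝ)) / 2) (l d : ℕ)
    (h : MvPolynomial (Fin n) ℝ) (hhom : h.IsHomogeneous l)
    (hharm : ∑ i : Fin n, pderiv i (pderiv i h) = 0)
    (p : ℕ) (hp : p = 2 * l + 2 * d + n - 1) :
    let f : ℝ × (Fin n → ℝ) → ℂ := fun z =>
      ((gpl r l d z.1 z.2 : ℝ) : ℂ) * ((eval z.2 h : ℝ) : ℂ) *
        ((1 - Complex.I * z.1) ^ 2 + ((∑ i, (z.2 i) ^ 2 : ℝ) : ℂ)) ^ (-((p : ℂ) / 2))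
    ContDiff ℝ (⊤ : ℕ∞) f ∧ ∀ z, Box n f z = 0 := by
  intro f
  have hpc : (p : ℂ) / 2 = (((l : ℝ) - r : ℝ) : ℂ) + d := by
    have h1 : p + 1 = 2 * l + 2 * d + n := by omega
    have h2 : (p : ℂ) + 1 = 2 * l + 2 * d + n := by exact_mod_cast h1
    rw [hr]
    push_cast
    linear_combination h2 / 2
  set α : ℂ := (((l : ℝ) - r : ℝ) : ℂ) with hαd
  have hα : α = l + ((n : ℂ) - 1) / 2 := by
    rw [hαd, hr]; push_cast; ring
  have hf : ∀ z, f z = ((eval z.2 h : ℝ) : ℂ) *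
      WaveAux.K α (WaveAux.wf z) (WaveAux.uf z) (WaveAux.vf z) d := by
    intro z
    have hρ : 0 ≤ ∑ i, (z.2 i) ^ 2 := Finset.sum_nonneg fun i _ => sq_nonneg _
    have hpos : 0 < (1 - qfun z.1 z.2) ^ 2 + 4 * ∑ i, (z.2 i) ^ 2 := by
      rcases hρ.eq_or_lt with h0 | h0
      · rw [← h0]
        unfold qfun
        rw [← h0]
        have : 0 < 1 - (-z.1 ^ 2 + 0) := by nlinarith [sq_nonneg z.1]
        positivity
      · positivity
    have hlam : lamfun z.1 z.2 ≠ 0 := (Real.sqrt_pos.2 hpos).ne'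
    have hlam2 : lamfun z.1 z.2 ^ 2 = (1 - qfun z.1 z.2) ^ 2 + 4 * ∑ i, (z.2 i) ^ 2 :=
      Real.sq_sqrt hpos.le
    have hwv : WaveAux.wf z * WaveAux.vf z = (lamfun z.1 z.2 : ℂ) ^ 2 := by
      rw [← Complex.ofReal_pow, hlam2]
      unfold WaveAux.wf WaveAux.vf qfun
      generalize ∑ i, (z.2 i) ^ 2 = ρ
      push_cast
      have hI4 : Complex.I ^ 4 = 1 := Complex.I_pow_four
      linear_combination ((z.1 : ℂ) ^ 2 * (2 * ρ - 2)) * Complex.I_sq + (z.1 : ℂ) ^ 4 * hI4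
    have := WaveAux.gegen_K ((l : ℝ) - r) (lamfun z.1 z.2) (1 - qfun z.1 z.2) hlam
      (WaveAux.wf z) (WaveAux.vf z) (Complex.slitPlane_ne_zero (WaveAux.wf_slit z)) hwv d
    simp only [f]
    rw [hpc]
    unfold WaveAux.uf gpl
    rw [← this]
    unfold WaveAux.wf
    ring
  have hf' : f = fun z => PowerSeries.coeff d (WaveAux.Hf h z * WaveAux.Sf α z) := by
    funext z
    rw [hf, WaveAux.Hf, PowerSeries.coeff_C_mul, WaveAux.Sf, WaveAux.coeff_S]
  constructor
  · have : f = fun z => ((eval z.2 h : ℝ) : ℂ) *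
      WaveAux.K α (WaveAux.wf z) (WaveAux.uf z) (WaveAux.vf z) d := funext hf
    rw [this]
    have hre : ∀ g : ℝ × (Fin n → ℝ) → ℝ, ContDiff ℝ (⊤ : ℕ∞) g →
        ContDiff ℝ (⊤ : ℕ∞) (fun z => (g z : ℂ)) :=
      fun g hg => Complex.ofRealCLM.contDiff.comp hg
    have hρ : ContDiff ℝ (⊤ : ℕ∞) (fun z : ℝ × (Fin n → ℝ) => ∑ i, (z.2 i) ^ 2) := by fun_prop
    have ht : ContDiff ℝ (⊤ : ℕ∞) (fun z : ℝ × (Fin n → ℝ) => (z.1 : ℂ)) := hre _ contDiff_fst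
    refine (hre _ ((WaveAux.eval_contDiff h).comp contDiff_snd)).mul
      (WaveAux.K_contDiff α ?_ ?_ ?_ WaveAux.wf_slit d)
    · exact ((contDiff_const.sub (contDiff_const.mul ht)).pow 2).add (hre _ hρ)
    · refine hre _ (contDiff_const.sub ?_)
      unfold qfun
      exact (contDiff_fst.pow 2).neg.add hρ
    · exact ((contDiff_const.add (contDiff_const.mul ht)).pow 2).add (hre _ hρ)
  · intro z
    rw [hf']
    exact WaveAux.box_zero l d α hα h hhom hharm z
end

section
/- Let k ≥ 0 and suppose g is a polynomial and h_l a spherical harmonic of degree l on S^{n-1} with 0 ≤ l ≤ k. The function (cos θ, x̂ sin θ) ↦ g(cos θ) sin^l θ · h_l(x̂) on Sⁿ lies in H_k(Sⁿ) (i.e. is the restriction of a degree-k harmonic homogeneous polynomial on ℝ^{n+1}) if and only if g satisfies (1-s²)g''(s) - (2(l-r)+1)s g'(s) + d(2(l-r)+d)g(s) = 0, where r = (1-n)/2 and d = k-l. -/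
open Polynomial MvPolynomial

namespace SepVar

/-- The Laplacian on polynomials. -/
noncomputable def lapl {m : ℕ} (f : MvPolynomial (Fin m) ℝ) : MvPolynomial (Fin m) ℝ :=
  ∑ i, pderiv i (pderiv i f)

/-- The squared radius. -/
noncomputable def rsq (m : ℕ) : MvPolynomial (Fin m) ℝ := ∑ i, MvPolynomial.X i ^ 2

lemma rsq_hom (m : ℕ) : (rsq m).IsHomogeneous 2 :=
  IsHomogeneous.sum _ _ _ fun i _ => isHomogeneous_X_pow i 2

lemma rsq_pow_hom (m N : ℕ) : (rsq m ^ N).IsHomogeneous (2 * N) := (rsq_hom m).pow N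

lemma pderiv_rsq {m : ℕ} (i : Fin m) :
    pderiv i (rsq m) = 2 * MvPolynomial.X i := by
  classical
  simp [rsq, pderiv_pow, pderiv_X, Pi.single_apply]

lemma lapl_rsq_mul {m e : ℕ} {f : MvPolynomial (Fin m) ℝ} (hf : f.IsHomogeneous e) :
    lapl (rsq m * f) = rsq m * lapl f + ((4 * e + 2 * m : ℕ) : MvPolynomial (Fin m) ℝ) * f := by
  have hE := hf.sum_X_mul_pderiv
  have h1 : ∀ i : Fin m, pderiv i (pderiv i (rsq m * f)) =
      rsq m * pderiv i (pderiv i f) + 4 * (MvPolynomial.X i * pderiv i f) + 2 * f := by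
    intro i
    have h2 : pderiv i (2 : MvPolynomial (Fin m) ℝ) = 0 := by
      have := pderiv_C (R := ℝ) (a := 2) (i := i)
      rwa [map_ofNat] at this
    simp only [pderiv_mul, pderiv_rsq, map_add, h2, pderiv_X_self]
    ring
  simp only [lapl, h1, Finset.sum_add_distrib, ← Finset.mul_sum, hE]
  simp
  ring

lemma lapl_rsq_pow_mul {m e : ℕ} {f : MvPolynomial (Fin m) ℝ} (hf : f.IsHomogeneous e) (N : ℕ) :
    rsq m * lapl (rsq m ^ N * f) = rsq m ^ (N + 1) * lapl f
      + MvPolynomial.C ((2 * N : ℝ) * (2 * N + 2 * e + m - 2)) * (rsq m ^ N * f) := by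
  induction N with
  | zero => simp
  | succ N ih =>
    have h1 := lapl_rsq_mul ((rsq_pow_hom m N).mul hf)
    rw [pow_succ' (rsq m) N, mul_assoc, h1, ih]
    push_cast
    simp only [map_add, map_sub, map_mul, map_natCast, map_ofNat, map_one]
    ring

lemma eval_smul_hom {m e : ℕ} {f : MvPolynomial (Fin m) ℝ} (hf : f.IsHomogeneous e)
    (c : ℝ) (x : Fin m → ℝ) :
    MvPolynomial.eval (c • x) f = c ^ e * MvPolynomial.eval x f := by
  rw [MvPolynomial.eval_eq', MvPolynomial.eval_eq', Finset.mul_sum]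
  refine Finset.sum_congr rfl fun d hd => ?_
  have h1 : ∑ i, d i = e := by
    have := hf.degree_eq_sum_deg_support hd
    rw [this]
    exact (Finset.sum_subset (Finset.subset_univ _) (by simp)).symm
  simp only [Pi.smul_apply, smul_eq_mul, mul_pow, Finset.prod_mul_distrib,
    Finset.prod_pow_eq_pow_sum, h1]
  ring

lemma exists_unit {n : ℕ} (hn : 2 ≤ n) (x : Fin n → ℝ) :
    ∃ (a : ℝ) (v : Fin n → ℝ), ∑ i, v i ^ 2 = 1 ∧ x = a • v := by
  classical
  by_cases hx : ∑ i, x i ^ 2 = 0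
  · refine ⟨0, Pi.single ⟨0, by omega⟩ 1, ?_, ?_⟩
    · simp [Pi.single_apply]
    · ext i
      have := (Finset.sum_eq_zero_iff_of_nonneg (fun i _ => sq_nonneg (x i))).1 hx i
        (Finset.mem_univ i)
      simpa using this
  · have h0 : 0 ≤ ∑ i, x i ^ 2 := Finset.sum_nonneg fun i _ => sq_nonneg _
    have hs : Real.sqrt (∑ i, x i ^ 2) ≠ 0 := by
      rw [Real.sqrt_ne_zero h0]; exact hx
    refine ⟨Real.sqrt (∑ i, x i ^ 2), (Real.sqrt (∑ i, x i ^ 2))⁻¹ • x, ?_, ?_⟩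
    · simp only [Pi.smul_apply, smul_eq_mul, mul_pow, ← Finset.mul_sum, inv_pow, Real.sq_sqrt h0]
      exact inv_mul_cancel₀ hx
    · rw [smul_smul, mul_inv_cancel₀ hs, one_smul]

lemma eq_zero_of_sphere {n : ℕ} (hn : 2 ≤ n) {e : ℕ} {f : MvPolynomial (Fin (n + 1)) ℝ}
    (hf : f.IsHomogeneous e)
    (H : ∀ (θ : ℝ) (v : Fin n → ℝ), ∑ i, v i ^ 2 = 1 →
      MvPolynomial.eval (Fin.cons (Real.cos θ) (Real.sin θ • v)) f = 0) : f = 0 := by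
  apply MvPolynomial.funext
  intro x
  obtain ⟨a, v, hv, hx⟩ := exists_unit hn (Fin.tail x)
  have h1 : x = ‖(⟨x 0, a⟩ : ℂ)‖ •
      (Fin.cons (Real.cos (Complex.arg ⟨x 0, a⟩)) (Real.sin (Complex.arg ⟨x 0, a⟩) • v) :
        Fin (n + 1) → ℝ) := by
    ext i
    refine Fin.cases ?_ (fun i => ?_) i
    · simp [Complex.norm_mul_cos_arg]
    · have := congrFun hx i
      simp only [Fin.tail, Pi.smul_apply, smul_eq_mul] at this
      simp [← mul_assoc, Complex.norm_mul_sin_arg, this]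
  rw [h1, eval_smul_hom hf, H _ _ hv]
  simp

lemma eval_rsq {n : ℕ} (θ : ℝ) (v : Fin n → ℝ) (hv : ∑ i, v i ^ 2 = 1) :
    MvPolynomial.eval (Fin.cons (Real.cos θ) (Real.sin θ • v)) (rsq (n + 1)) = 1 := by
  simp [rsq, Fin.sum_univ_succ, mul_pow, ← Finset.mul_sum, hv]

lemma eval_rename {n l : ℕ} {h : MvPolynomial (Fin n) ℝ} (hhom : h.IsHomogeneous l)
    (t a : ℝ) (v : Fin n → ℝ) :
    MvPolynomial.eval (Fin.cons t (a • v)) (rename Fin.succ h)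
      = a ^ l * MvPolynomial.eval v h := by
  rw [MvPolynomial.eval_rename, ← eval_smul_hom hhom]
  congr 1

lemma lapl_X_pow_mul {n : ℕ} {h : MvPolynomial (Fin n) ℝ}
    (hharm : ∑ i : Fin n, pderiv i (pderiv i h) = 0) (j : ℕ) :
    lapl (MvPolynomial.X 0 ^ j * rename Fin.succ h) =
      MvPolynomial.C ((j : ℝ) * ((j - 1 : ℕ) : ℝ)) *
        (MvPolynomial.X 0 ^ (j - 2) * rename Fin.succ h) := by
  have h0 : pderiv 0 (rename Fin.succ h) = 0 := by
    classical
    apply pderiv_eq_zero_of_notMem_vars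
    intro hm
    have := vars_rename Fin.succ h hm
    simp at this
  have hs : ∀ i : Fin n, pderiv i.succ ((MvPolynomial.X 0 : MvPolynomial (Fin (n+1)) ℝ) ^ j) = 0 := by
    intro i
    rw [pderiv_pow, pderiv_X_of_ne (Fin.succ_ne_zero i).symm, mul_zero]
  have hsum : ∑ i : Fin n, rename Fin.succ (pderiv i (pderiv i h)) = 0 := by
    rw [← map_sum, hharm, map_zero]
  have hc : ∀ q : ℕ, pderiv (0 : Fin (n+1)) ((q : ℕ) : MvPolynomial (Fin (n+1)) ℝ) = 0 := by
    intro q; simpa using pderiv_C (R := ℝ) (a := (q:ℝ)) (i := (0 : Fin (n+1)))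
  rw [lapl, Fin.sum_univ_succ]
  simp only [pderiv_mul, hs, h0, pderiv_rename (Fin.succ_injective n), zero_mul, mul_zero,
    zero_add, add_zero, ← Finset.mul_sum, hsum, pderiv_pow, pderiv_X_self, hc, mul_one]
  simp [Nat.sub_sub]
  ring

/-- The homogenised separated function. -/
noncomputable def sep {n : ℕ} (h : MvPolynomial (Fin n) ℝ) (g : Polynomial ℝ) (D : ℕ) :
    MvPolynomial (Fin (n + 1)) ℝ :=
  ∑ j ∈ Finset.range (D + 1), MvPolynomial.C (g.coeff j) *
    (rsq (n + 1) ^ ((D - j) / 2) * (MvPolynomial.X 0 ^ j * rename Fin.succ h))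

lemma X_pow_rename_hom {n l : ℕ} {h : MvPolynomial (Fin n) ℝ} (hhom : h.IsHomogeneous l) (j : ℕ) :
    ((MvPolynomial.X 0 : MvPolynomial (Fin (n+1)) ℝ) ^ j * rename Fin.succ h).IsHomogeneous
      (j + l) :=
  (isHomogeneous_X_pow 0 j).mul hhom.rename_isHomogeneous

lemma sep_hom {n l : ℕ} {h : MvPolynomial (Fin n) ℝ} (hhom : h.IsHomogeneous l)
    {g : Polynomial ℝ} {D : ℕ} (hg : ∀ j, g.coeff j ≠ 0 → ∃ i, j + 2 * i = D) :
    (sep h g D).IsHomogeneous (D + l) := by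
  refine IsHomogeneous.sum _ _ _ fun j _ => ?_
  by_cases hj : g.coeff j = 0
  · rw [hj, map_zero, zero_mul]; exact isHomogeneous_zero _ _ _
  · obtain ⟨i, hi⟩ := hg j hj
    refine IsHomogeneous.C_mul ?_ _
    convert (rsq_pow_hom (n+1) ((D - j) / 2)).mul (X_pow_rename_hom hhom j) using 1
    omega

lemma natDegree_lt {g : Polynomial ℝ} {D : ℕ} (hg : ∀ j, g.coeff j ≠ 0 → ∃ i, j + 2 * i = D) :
    g.natDegree < D + 1 := by
  by_cases h0 : g = 0
  · simp [h0]
  · obtain ⟨i, hi⟩ := hg g.natDegree (by simpa using h0)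
    omega

lemma eval_sep {n l : ℕ} {h : MvPolynomial (Fin n) ℝ} (hhom : h.IsHomogeneous l)
    {g : Polynomial ℝ} {D : ℕ} (hg : ∀ j, g.coeff j ≠ 0 → ∃ i, j + 2 * i = D)
    (θ : ℝ) (v : Fin n → ℝ) (hv : ∑ i, v i ^ 2 = 1) :
    MvPolynomial.eval (Fin.cons (Real.cos θ) (Real.sin θ • v)) (sep h g D)
      = g.eval (Real.cos θ) * (Real.sin θ) ^ l * MvPolynomial.eval v h := by
  rw [Polynomial.eval_eq_sum_range' (natDegree_lt hg), sep, map_sum, Finset.sum_mul,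
    Finset.sum_mul]
  refine Finset.sum_congr rfl fun j _ => ?_
  simp only [map_mul, map_pow, eval_rsq θ v hv, eval_rename hhom, MvPolynomial.eval_C,
    MvPolynomial.eval_X, Fin.cons_zero]
  ring

/-- The Gegenbauer operator. -/
noncomputable def geg (b a : ℝ) (g : Polynomial ℝ) : Polynomial ℝ :=
  (1 - Polynomial.X ^ 2) * derivative (derivative g)
        - Polynomial.C b * Polynomial.X * derivative g + Polynomial.C a * g

lemma geg_sum (b a : ℝ) (s : Finset ℕ) (f : ℕ → Polynomial ℝ) :
    geg b a (∑ i ∈ s, f i) = ∑ i ∈ s, geg b a (f i) := by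
  simp only [geg, Polynomial.derivative_sum, Finset.mul_sum, Finset.sum_add_distrib,
    Finset.sum_sub_distrib]

lemma eval_geg_monomial (c D y : ℝ) (j : ℕ) (s : ℝ) :
    (geg (c + 1) (D * (c + D)) (Polynomial.monomial j y)).eval s =
      y * ((j : ℝ) * ((j - 1 : ℕ) : ℝ) * s ^ (j - 2) + (D - j) * (D + j + c) * s ^ j) := by
  rcases j with _ | _ | j
  · simp [geg, derivative_monomial]; ring
  · simp [geg, derivative_monomial]; ring
  · simp [geg, derivative_monomial]; ring

lemma eval_geg {g : Polynomial ℝ} {D : ℕ} (hg : g.natDegree < D + 1) (c s : ℝ) :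
    (geg (c + 1) (D * (c + D)) g).eval s = ∑ j ∈ Finset.range (D + 1),
      g.coeff j * ((j : ℝ) * ((j - 1 : ℕ) : ℝ) * s ^ (j - 2) + (D - j) * (D + j + c) * s ^ j) := by
  conv_lhs => rw [g.as_sum_range' _ hg]
  rw [geg_sum, Polynomial.eval_finsetSum]
  exact Finset.sum_congr rfl fun j _ => eval_geg_monomial _ _ _ _ _

lemma lapl_sum {m : ℕ} (s : Finset ℕ) (f : ℕ → MvPolynomial (Fin m) ℝ) :
    lapl (∑ i ∈ s, f i) = ∑ i ∈ s, lapl (f i) := by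
  simp only [lapl, map_sum]
  exact Finset.sum_comm

lemma lapl_C_mul {m : ℕ} (a : ℝ) (f : MvPolynomial (Fin m) ℝ) :
    lapl (MvPolynomial.C a * f) = MvPolynomial.C a * lapl f := by
  simp only [lapl, pderiv_C_mul, Finset.mul_sum]

lemma eval_lapl_sep {n l : ℕ} {h : MvPolynomial (Fin n) ℝ} (hhom : h.IsHomogeneous l)
    (hharm : ∑ i : Fin n, pderiv i (pderiv i h) = 0)
    {g : Polynomial ℝ} {D : ℕ} (hg : ∀ j, g.coeff j ≠ 0 → ∃ i, j + 2 * i = D)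
    (θ : ℝ) (v : Fin n → ℝ) (hv : ∑ i, v i ^ 2 = 1) :
    MvPolynomial.eval (Fin.cons (Real.cos θ) (Real.sin θ • v)) (rsq (n + 1) * lapl (sep h g D))
      = (geg ((2 * l + n - 1 : ℝ) + 1) (D * ((2 * l + n - 1) + D)) g).eval (Real.cos θ)
        * (Real.sin θ) ^ l * MvPolynomial.eval v h := by
  rw [eval_geg (natDegree_lt hg), sep, lapl_sum, Finset.mul_sum, map_sum, Finset.sum_mul,
    Finset.sum_mul]
  refine Finset.sum_congr rfl fun j _ => ?_
  by_cases hj : g.coeff j = 0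
  · simp [hj, lapl]
  obtain ⟨i, hi⟩ := hg j hj
  have hi2 : (D - j) / 2 = i := by omega
  have hD : (D : ℝ) = j + 2 * i := by rw [← hi]; push_cast; ring
  rw [lapl_C_mul, mul_left_comm, lapl_rsq_pow_mul (X_pow_rename_hom hhom j), hi2,
    lapl_X_pow_mul hharm]
  simp only [map_mul, map_add, map_pow, eval_rsq θ v hv, eval_rename hhom, MvPolynomial.eval_C,
    MvPolynomial.eval_X, Fin.cons_zero]
  rw [hD]
  push_cast
  ring

lemma poly_zero_of_cos {p : Polynomial ℝ}
    (H : ∀ θ : ℝ, Real.sin θ ≠ 0 → p.eval (Real.cos θ) = 0) : p = 0 := by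
  apply Polynomial.eq_zero_of_infinite_isRoot
  refine (Set.Ioo_infinite (show (-1 : ℝ) < 1 by norm_num)).mono ?_
  rintro x ⟨h1, h2⟩
  have := H (Real.arccos x) (by
    rw [Real.sin_arccos]
    apply ne_of_gt
    apply Real.sqrt_pos.2
    nlinarith)
  rwa [Real.cos_arccos h1.le h2.le] at this

lemma coeff_geg (b a : ℝ) (g : Polynomial ℝ) (j : ℕ) :
    (geg b a g).coeff j = (j + 2) * (j + 1) * g.coeff (j + 2)
      - (j * (j - 1) + b * j - a) * g.coeff j := by
  rcases j with _ | _ | j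
  · simp [geg, sub_mul, mul_assoc, Polynomial.coeff_derivative, Polynomial.coeff_X_pow_mul']; ring
  · simp [geg, sub_mul, mul_assoc, Polynomial.coeff_derivative, Polynomial.coeff_X_pow_mul']; ring
  · simp [geg, sub_mul, mul_assoc, Polynomial.coeff_derivative, Polynomial.coeff_X_pow_mul']; ring

lemma coeff_of_geg {c : ℝ} (hc : 0 < c) {d : ℕ} {g : Polynomial ℝ}
    (H : geg (c + 1) (d * (c + d)) g = 0) (j : ℕ) (hj : g.coeff j ≠ 0) :
    ∃ i, j + 2 * i = d := by
  by_contra hcon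
  push Not at hcon
  have key : ∀ i, g.coeff (j + 2 * i) ≠ 0 := by
    intro i
    induction i with
    | zero => simpa using hj
    | succ i ih =>
      intro h0
      have h1 := coeff_geg (c + 1) (d * (c + d)) g (j + 2 * i)
      rw [H, show j + 2 * i + 2 = j + 2 * (i + 1) by ring, h0] at h1
      generalize hq : j + 2 * i = q at *
      have h2 : ((q : ℝ) - d) * (q + d + c) * g.coeff q = 0 := by
        simp only [Polynomial.coeff_zero] at h1
        linear_combination h1
      have h3 : (q : ℝ) - d ≠ 0 := by
        rw [sub_ne_zero]
        exact_mod_cast hq ▸ hcon i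
      have h4 : (q : ℝ) + d + c ≠ 0 := by positivity
      exact (mul_ne_zero (mul_ne_zero h3 h4) ih) h2
  apply key (g.natDegree + 1)
  apply Polynomial.coeff_eq_zero_of_natDegree_lt
  omega

lemma parity {d : ℕ} {g : Polynomial ℝ}
    (H : ∀ θ : ℝ, Real.sin θ ≠ 0 →
      g.eval (-Real.cos θ) = (-1) ^ d * g.eval (Real.cos θ)) (j : ℕ) (hj : g.coeff j ≠ 0) :
    Even (j + d) := by
  have h1 : g.comp (-Polynomial.X) - Polynomial.C ((-1) ^ d) * g = 0 := by
    apply poly_zero_of_cos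
    intro θ hθ
    simp [H θ hθ]
  have h2 := congrArg (fun p => Polynomial.coeff p j) h1
  have h3 : (g.comp (-Polynomial.X)).coeff j = (-1) ^ j * g.coeff j := by
    have := Polynomial.comp_C_mul_X_coeff (p := g) (r := (-1 : ℝ)) (n := j)
    rw [mul_comm]
    simpa using this
  simp only [Polynomial.coeff_sub, Polynomial.coeff_C_mul, h3, Polynomial.coeff_zero, ← sub_mul,
    mul_eq_zero, hj, or_false, sub_eq_zero] at h2
  by_contra hodd
  rw [Nat.not_even_iff_odd] at hodd
  have h4 : (-1 : ℝ) ^ (j + d) = -1 := hodd.neg_one_pow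
  rw [pow_add, h2, ← pow_add, (Even.neg_one_pow ⟨d, rfl⟩)] at h4
  norm_num at h4

end SepVar

/-- `g(cos θ) sin^l θ · h_l(x̂)` extends to a degree-`k` harmonic homogeneous polynomial on
`ℝ^{n+1}` (i.e. lies in `H_k(Sⁿ)`) if and only if `g` satisfies the Gegenbauer differential
equation `(1-s²)g'' - (2(l-r)+1)s g' + d(2(l-r)+d)g = 0`, where `r = (1-n)/2`, `d = k-l`. -/
theorem separated_variables_harmonicity (n : ℕ) (hn : 2 ≤ n) (k l : ℕ) (hlk : l ≤ k)
    (r : ℝ) (hr : r = (1 - (n : ℝ)) / 2)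
    (h : MvPolynomial (Fin n) ℝ) (hh : h ≠ 0) (hhom : h.IsHomogeneous l)
    (hharm : ∑ i : Fin n, pderiv i (pderiv i h) = 0)
    (g : Polynomial ℝ) :
    (∃ P : MvPolynomial (Fin (n + 1)) ℝ,
        P.IsHomogeneous k ∧
        (∑ i : Fin (n + 1), pderiv i (pderiv i P) = 0) ∧
        ∀ (θ : ℝ) (v : Fin n → ℝ), (∑ i, (v i) ^ 2) = 1 →
          MvPolynomial.eval (Fin.cons (Real.cos θ) (Real.sin θ • v)) P
            = g.eval (Real.cos θ) * (Real.sin θ) ^ l * MvPolynomial.eval v h) ↔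
    ((1 - Polynomial.X ^ 2) * derivative (derivative g)
        - Polynomial.C (2 * ((l : ℝ) - r) + 1) * Polynomial.X * derivative g
        + Polynomial.C (((k - l : ℕ) : ℝ) * (2 * ((l : ℝ) - r) + ((k - l : ℕ) : ℝ))) * g
      = 0) := by
  have hn2 : (2 : ℝ) ≤ n := by exact_mod_cast hn
  have hL : (1 - Polynomial.X ^ 2) * derivative (derivative g)
        - Polynomial.C (2 * ((l : ℝ) - r) + 1) * Polynomial.X * derivative g
        + Polynomial.C (((k - l : ℕ) : ℝ) * (2 * ((l : ℝ) - r) + ((k - l : ℕ) : ℝ))) * g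
      = SepVar.geg ((2 * l + n - 1 : ℝ) + 1) (((k - l : ℕ) : ℝ) * ((2 * l + n - 1) + ((k - l : ℕ) : ℝ))) g := by
    rw [SepVar.geg, show 2 * ((l : ℝ) - r) = 2 * l + n - 1 by rw [hr]; ring]
  rw [hL]
  obtain ⟨d, rfl⟩ := Nat.exists_eq_add_of_le hlk
  rw [show l + d - l = d by omega]
  constructor
  · rintro ⟨P, hPhom, hPharm, hP⟩
    obtain ⟨v, hv, hv0⟩ : ∃ v : Fin n → ℝ, ∑ i, v i ^ 2 = 1 ∧ MvPolynomial.eval v h ≠ 0 := by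
      by_contra! hcon
      apply hh
      apply MvPolynomial.funext
      intro x
      obtain ⟨a, v, hv, rfl⟩ := SepVar.exists_unit hn x
      rw [SepVar.eval_smul_hom hhom, hcon v hv]
      simp
    have hpar : ∀ j, g.coeff j ≠ 0 → Even (j + d) := by
      apply SepVar.parity
      intro θ hθ
      have h1 := hP (Real.pi - θ) (-v) (by simpa using hv)
      have h2 := hP θ v hv
      have h3 : (Fin.cons (Real.cos (Real.pi - θ)) (Real.sin (Real.pi - θ) • (-v)) :
          Fin (n + 1) → ℝ) = (-1 : ℝ) • Fin.cons (Real.cos θ) (Real.sin θ • v) := by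
        ext i
        refine Fin.cases ?_ (fun i => ?_) i <;> simp
      have h4 : MvPolynomial.eval (-v) h = (-1) ^ l * MvPolynomial.eval v h := by
        rw [← SepVar.eval_smul_hom hhom]; simp
      rw [h3, SepVar.eval_smul_hom hPhom, h2, h4, Real.cos_pi_sub, Real.sin_pi_sub, pow_add] at h1
      have h5 : (Real.sin θ) ^ l * MvPolynomial.eval v h * (-1) ^ l ≠ 0 :=
        mul_ne_zero (mul_ne_zero (pow_ne_zero _ hθ) hv0) (pow_ne_zero _ (by norm_num))
      apply mul_right_cancel₀ h5
      linear_combination -h1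
    have hg : ∀ j, g.coeff j ≠ 0 → ∃ i, j + 2 * i = d + 2 * g.natDegree := by
      intro j hj
      obtain ⟨q, hq⟩ := hpar j hj
      have := Polynomial.le_natDegree_of_ne_zero hj
      exact ⟨(d + 2 * g.natDegree - j) / 2, by omega⟩
    generalize g.natDegree = N at hg
    have hEq : SepVar.rsq (n + 1) ^ N * P = SepVar.sep h g (d + 2 * N) := by
      rw [← sub_eq_zero]
      have e1 : (SepVar.rsq (n + 1) ^ N * P).IsHomogeneous (d + 2 * N + l) := by
        convert (SepVar.rsq_pow_hom (n + 1) N).mul hPhom using 1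
        ring
      refine SepVar.eq_zero_of_sphere hn (e1.sub (SepVar.sep_hom hhom hg)) ?_
      intro θ w hw
      rw [map_sub, map_mul, map_pow, SepVar.eval_rsq θ w hw, SepVar.eval_sep hhom hg θ w hw,
        hP θ w hw]
      ring
    apply SepVar.poly_zero_of_cos
    intro θ hθ
    have h1 := SepVar.eval_lapl_sep hhom hharm hg θ v hv
    have h0 : SepVar.lapl P = 0 := hPharm
    rw [← hEq, SepVar.lapl_rsq_pow_mul hPhom, h0] at h1
    simp only [map_mul, map_add, map_pow, SepVar.eval_rsq θ v hv, MvPolynomial.eval_C, hP θ v hv,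
      map_zero] at h1
    have h5 : (Real.sin θ) ^ l * MvPolynomial.eval v h ≠ 0 :=
        (mul_ne_zero (pow_ne_zero _ hθ) hv0)
    apply mul_right_cancel₀ h5
    simp only [SepVar.geg, Polynomial.eval_add, Polynomial.eval_sub, Polynomial.eval_mul,
      Polynomial.eval_C] at h1 ⊢
    push_cast at h1 ⊢
    linear_combination -h1
  · intro H
    have hg := SepVar.coeff_of_geg (c := 2 * l + n - 1)
      (by have : (0 : ℝ) ≤ l := Nat.cast_nonneg l
          linarith) H
    have hS := SepVar.sep_hom hhom hg
    refine ⟨SepVar.sep h g d, by rwa [add_comm l d], ?_, SepVar.eval_sep hhom hg⟩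
    change SepVar.lapl (SepVar.sep h g d) = 0
    have hlap : (SepVar.lapl (SepVar.sep h g d)).IsHomogeneous (d + l - 1 - 1) :=
      IsHomogeneous.sum _ _ _ fun i _ => hS.pderiv.pderiv
    refine SepVar.eq_zero_of_sphere hn hlap ?_
    intro θ v hv
    have h1 := SepVar.eval_lapl_sep hhom hharm hg θ v hv
    rw [map_mul, SepVar.eval_rsq θ v hv, H] at h1
    simpa using h1
end
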